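/- arXiv:2602.14487 — 5 statements merged into one kernel-verified Lean document; each statement's English description precedes it below -/
import Mathlib

section
/- For every k ≥ 0, the probability that τ = 2k+1 equals the k-th Catalan number divided by 2^{2k+1}; that is, P(τ = 2k+1) = (1/(2·4^k)) · (1/(k+1)) · C(2k, k), where C(2k, k) denotes the central binomial coefficient. -/
open MeasureTheory ProbabilityTheory

/-!
The walk first reaches `1` at time `n + 1` exactly when it stays nonpositive up to time `n`, is at
`0` at time `n`, and then steps up. Reading `U` for `-1` and `D` for `1`, the first `n` steps of
such a path spell a Dyck word, so `n = 2k` and there are `catalan k` such paths. By independence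
each of them has probability `p ^ (k + 1) * q ^ k`, where `p` and `q` are the probabilities of the
steps `1` and `-1`.
-/

section FirstPassage

/-- The first time `n ≥ 1` at which the walk with steps `x` is at `1`; it takes the junk value `0`
when there is no such time. -/
noncomputable def firstPassage (x : ℕ → ℤ) : ℕ :=
  sInf {n | 1 ≤ n ∧ ∑ i ∈ Finset.range n, x i = 1}

variable {x : ℕ → ℤ} {n : ℕ}

lemma sum_range_nonpos_of_lt_firstPassage (hx : ∀ i, x i ≤ 1) {m : ℕ} (hm : m < firstPassage x) :
    ∑ i ∈ Finset.range m, x i ≤ 0 := by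
  induction m with
  | zero => simp
  | succ m ih =>
    have h_before : ∑ i ∈ Finset.range m, x i ≤ 0 := ih (by omega)
    have h_ne : ∑ i ∈ Finset.range (m + 1), x i ≠ 1 := fun h ↦
      Nat.notMem_of_lt_sInf hm ⟨by omega, h⟩
    rw [Finset.sum_range_succ] at h_ne ⊢
    have := hx m
    omega

lemma firstPassage_eq_succ_iff (hx : ∀ i, x i ≤ 1) :
    firstPassage x = n + 1 ↔
      (∀ m ≤ n, ∑ i ∈ Finset.range m, x i ≤ 0) ∧ ∑ i ∈ Finset.range n, x i = 0 ∧ x n = 1 := by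
  constructor
  · intro h
    have h_nonpos : ∀ m ≤ n, ∑ i ∈ Finset.range m, x i ≤ 0 := fun m hm ↦
      sum_range_nonpos_of_lt_firstPassage hx (by omega)
    have h_mem := Nat.sInf_mem (Nat.nonempty_of_pos_sInf (h ▸ n.succ_pos : 0 < firstPassage x))
    have h_hit : ∑ i ∈ Finset.range (n + 1), x i = 1 := h ▸ h_mem.2
    rw [Finset.sum_range_succ] at h_hit
    have := h_nonpos n le_rfl
    have := hx n
    exact ⟨h_nonpos, by omega, by omega⟩
  · rintro ⟨h_nonpos, h_zero, h_up⟩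
    refine IsLeast.csInf_eq ⟨⟨by omega, by rw [Finset.sum_range_succ, h_zero, h_up, zero_add]⟩, ?_⟩
    rintro m ⟨-, hm⟩
    by_contra! h_lt
    have := h_nonpos m (by omega)
    omega

end FirstPassage

/-- The step of the walk encoded by a letter of a Dyck word. The walk is the reflected Dyck path:
it stays nonpositive where the Dyck path stays nonnegative. -/
def walkStep : DyckStep → ℤ
  | .U => -1
  | .D => 1

lemma walkStep_injective : Function.Injective walkStep := by
  rintro (_ | _) (_ | _) h <;> simp_all [walkStep]

lemma sum_range_walkStep (s : ℕ → DyckStep) (n : ℕ) :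
    ∑ i ∈ Finset.range n, walkStep (s i) =
      ((List.range n).map s).count .D - ((List.range n).map s).count .U := by
  induction n with
  | zero => simp
  | succ n ih =>
    rw [Finset.sum_range_succ, ih, List.range_succ, List.map_append, List.map_singleton,
      List.count_append, List.count_append]
    cases s n <;> simp [walkStep, sub_eq_add_neg, add_assoc, add_comm, add_left_comm]

lemma exists_dyckWord_toList_eq_iff (s : ℕ → DyckStep) (n : ℕ) :
    (∃ w : DyckWord, w.toList = (List.range n).map s) ↔
      (∀ m ≤ n, ∑ i ∈ Finset.range m, walkStep (s i) ≤ 0) ∧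
        ∑ i ∈ Finset.range n, walkStep (s i) = 0 := by
  have h_take (m : ℕ) : ((List.range n).map s).take m = (List.range (min m n)).map s := by
    rw [← List.map_take, List.take_range]
  simp only [sum_range_walkStep]
  constructor
  · rintro ⟨w, hw⟩
    refine ⟨fun m hm ↦ ?_, ?_⟩
    · have := w.count_D_le_count_U m
      rw [hw, h_take, min_eq_left hm] at this
      omega
    · have := w.count_U_eq_count_D
      rw [hw] at this
      omega
  · rintro ⟨h_nonpos, h_zero⟩
    refine ⟨⟨(List.range n).map s, by omega, fun m ↦ ?_⟩, rfl⟩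
    have := h_nonpos _ (min_le_right m n)
    rw [h_take]
    omega

/-- The steps of the walk that follows the Dyck word `w`, reflected, and then steps up to `1`. -/
def passagePath (w : DyckWord) : List ℤ :=
  (w.toList ++ [DyckStep.D]).map walkStep

lemma prod_map_passagePath {M : Type*} [CommMonoid M] (f : ℤ → M) (w : DyckWord) :
    ((passagePath w).map f).prod = f 1 ^ (w.semilength + 1) * f (-1) ^ w.semilength := by
  have h_prod (l : List DyckStep) :
      ((l.map walkStep).map f).prod = f 1 ^ l.count .D * f (-1) ^ l.count .U := by
    induction l with
    | nil => simp
    | cons a l ih =>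
      rw [List.map_cons, List.map_cons, List.prod_cons, ih]
      cases a <;> simp [walkStep, pow_succ', mul_assoc, mul_left_comm]
  have h_count_D : (w.toList ++ [DyckStep.D]).count .D = w.semilength + 1 := by
    simp [w.semilength_eq_count_D]
  have h_count_U : (w.toList ++ [DyckStep.D]).count .U = w.semilength := by
    simp [DyckWord.semilength]
  rw [passagePath, h_prod, h_count_D, h_count_U]

lemma passagePath_injective : Function.Injective passagePath := fun _ _ h ↦
  DyckWord.ext (List.append_cancel_right (walkStep_injective.list_map h))

lemma length_passagePath (w : DyckWord) : (passagePath w).length = 2 * w.semilength + 1 := by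
  simp [passagePath, w.two_mul_semilength_eq_length]

lemma firstPassage_eq_iff_exists_passagePath {x : ℕ → ℤ} (hx : ∀ i, x i = 1 ∨ x i = -1) (k : ℕ) :
    firstPassage x = 2 * k + 1 ↔
      ∃ w : DyckWord, w.semilength = k ∧ (List.range (2 * k + 1)).map x = passagePath w := by
  obtain ⟨s, rfl⟩ : ∃ s : ℕ → DyckStep, x = fun i ↦ walkStep (s i) := by
    choose s hs using fun i ↦ show ∃ a, x i = walkStep a from
      (hx i).elim (fun h ↦ ⟨.D, h⟩) (fun h ↦ ⟨.U, h⟩)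
    exact ⟨s, funext hs⟩
  have h_path (w : DyckWord) :
      (List.range (2 * k + 1)).map (fun i ↦ walkStep (s i)) = passagePath w ↔
        w.toList = (List.range (2 * k)).map s ∧ s (2 * k) = .D := by
    rw [passagePath, ← Function.comp_def, ← List.map_map, walkStep_injective.list_map.eq_iff,
      List.range_succ, List.map_append, List.map_singleton, ← List.concat_eq_append,
      ← List.concat_eq_append, List.concat_inj, eq_comm (a := w.toList)]
  have h_semilength {w : DyckWord} (hw : w.toList = (List.range (2 * k)).map s) :
      w.semilength = k := by
    have := w.two_mul_semilength_eq_length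
    rw [hw, List.length_map, List.length_range] at this
    omega
  rw [firstPassage_eq_succ_iff fun i ↦ (hx i).elim le_of_eq (·.trans_le (by decide)), ← and_assoc,
    ← exists_dyckWord_toList_eq_iff, show (1 : ℤ) = walkStep .D from rfl,
    walkStep_injective.eq_iff]
  simp only [h_path]
  exact ⟨fun ⟨⟨w, hw⟩, h_up⟩ ↦ ⟨w, h_semilength hw, hw, h_up⟩,
    fun ⟨w, _, hw, h_up⟩ ↦ ⟨⟨w, hw⟩, h_up⟩⟩

section Cylinder

variable {Ω α : Type*}

/-- The event that the process `X` starts with the values listed in `l`. -/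
def pathCylinder (X : ℕ → Ω → α) (l : List α) : Set Ω :=
  {ω | (List.range l.length).map (X · ω) = l}

lemma pathCylinder_eq_iInter (X : ℕ → Ω → α) (l : List α) :
    pathCylinder X l = ⋂ i : Fin l.length, X i ⁻¹' {l[i]} := by
  ext ω
  simp [pathCylinder, List.ext_getElem_iff, Fin.forall_iff]

lemma disjoint_pathCylinder {X : ℕ → Ω → α} {l l' : List α} (h_length : l.length = l'.length)
    (h_ne : l ≠ l') : Disjoint (pathCylinder X l) (pathCylinder X l') := by
  refine Set.disjoint_left.2 fun ω (hl : _ = l) (hl' : _ = l') ↦ h_ne ?_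
  rw [← hl, h_length, hl']

variable [MeasurableSpace Ω] {P : Measure Ω} [MeasurableSpace α] [MeasurableSingletonClass α]

lemma nullMeasurableSet_pathCylinder {X : ℕ → Ω → α} (hX : ∀ i, AEMeasurable (X i) P) (l : List α) :
    NullMeasurableSet (pathCylinder X l) P := by
  rw [pathCylinder_eq_iInter]
  exact .iInter fun i ↦ (hX i).nullMeasurableSet_preimage (measurableSet_singleton _)

lemma measure_pathCylinder {X : ℕ → Ω → α} (hX : iIndepFun X P) {l : List α} {law : α → ENNReal}
    (h_law : ∀ i, ∀ a ∈ l, P (X i ⁻¹' {a}) = law a) : P (pathCylinder X l) = (l.map law).prod := by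
  calc P (pathCylinder X l)
      = ∏ i : Fin l.length, P (X i ⁻¹' {l[i]}) := by
        rw [pathCylinder_eq_iInter]
        exact (hX.precomp Fin.val_injective).meas_iInter fun i ↦ ⟨_, measurableSet_singleton _, rfl⟩
    _ = ∏ i : Fin l.length, law l[i] :=
        Finset.prod_congr rfl fun i _ ↦ h_law i _ (List.getElem_mem _)
    _ = (l.map law).prod := Fin.prod_univ_fun_getElem _ _

lemma ae_eq_or_eq_of_measure_add_eq_one [IsProbabilityMeasure P] {Y : Ω → α}
    (hY : AEMeasurable Y P) {a b : α} (hab : a ≠ b)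
    (h : P {ω | Y ω = a} + P {ω | Y ω = b} = 1) : ∀ᵐ ω ∂P, Y ω = a ∨ Y ω = b := by
  have h_null (c : α) : NullMeasurableSet {ω | Y ω = c} P :=
    hY.nullMeasurableSet_preimage (measurableSet_singleton c)
  have h_disj : Disjoint {ω | Y ω = a} {ω | Y ω = b} :=
    Set.disjoint_left.2 fun ω ha hb ↦ hab (ha.symm.trans hb)
  refine (mem_ae_iff_prob_eq_one₀ ((h_null a).union (h_null b))).2 ?_
  rw [measure_union₀ (h_null b) h_disj.aedisjoint, h]

end Cylinder

section Probability

open scoped ENNReal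

variable {Ω : Type*} [MeasurableSpace Ω] {P : Measure Ω} {X : ℕ → Ω → ℤ} {p q : ℝ≥0∞}

lemma measure_pathCylinder_passagePath (hindep : iIndepFun X P)
    (hup : ∀ i, P {ω | X i ω = 1} = p) (hdown : ∀ i, P {ω | X i ω = -1} = q) (w : DyckWord) :
    P (pathCylinder X (passagePath w)) = p ^ (w.semilength + 1) * q ^ w.semilength := by
  have h_law (i : ℕ) : ∀ a ∈ passagePath w, P (X i ⁻¹' {a}) = P (X 0 ⁻¹' {a}) := by
    refine List.forall_mem_map.2 fun a _ ↦ ?_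
    cases a
    · exact (hdown i).trans (hdown 0).symm
    · exact (hup i).trans (hup 0).symm
  rw [measure_pathCylinder hindep h_law, prod_map_passagePath]
  exact congrArg₂ (· ^ _ * · ^ _) (hup 0) (hdown 0)

theorem prob_tau_eq_general (hmeas : ∀ i, AEMeasurable (X i) P) (hindep : iIndepFun X P)
    (hup : ∀ i, P {ω | X i ω = 1} = p) (hdown : ∀ i, P {ω | X i ω = -1} = q) (hpq : p + q = 1)
    {τ : Ω → ℕ} (hτ : ∀ ω, τ ω = sInf {n | 1 ≤ n ∧ (∑ i ∈ Finset.range n, X i ω) = 1}) (k : ℕ) :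
    P {ω | τ ω = 2 * k + 1} = catalan k * (p ^ (k + 1) * q ^ k) := by
  have := hindep.isProbabilityMeasure
  have h_steps : ∀ᵐ ω ∂P, ∀ i, X i ω = 1 ∨ X i ω = -1 := ae_all_iff.2 fun i ↦
    ae_eq_or_eq_of_measure_add_eq_one (hmeas i) (by decide) (by rw [hup, hdown, hpq])
  have h_paths : {ω | τ ω = 2 * k + 1} =ᵐ[P]
      ⋃ w : {w : DyckWord // w.semilength = k}, pathCylinder X (passagePath w) := by
    refine Filter.eventuallyEq_set.2 (h_steps.mono fun ω hω ↦ ?_)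
    have h_firstPassage : τ ω = firstPassage (X · ω) := hτ ω
    rw [Set.mem_ofPred_eq, h_firstPassage, firstPassage_eq_iff_exists_passagePath hω]
    simp only [Set.mem_iUnion, Subtype.exists, exists_prop]
    refine exists_congr fun w ↦ and_congr_right fun hw ↦ ?_
    rw [pathCylinder, Set.mem_ofPred_eq, length_passagePath, hw]
  have h_disjoint : Pairwise (Function.onFun Disjoint
      fun w : {w : DyckWord // w.semilength = k} ↦ pathCylinder X (passagePath w)) := fun w w' h ↦
    disjoint_pathCylinder (by rw [length_passagePath, length_passagePath, w.2, w'.2])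
      (passagePath_injective.ne (Subtype.coe_injective.ne h))
  calc P {ω | τ ω = 2 * k + 1}
      = ∑ w : {w : DyckWord // w.semilength = k}, P (pathCylinder X (passagePath w)) := by
        rw [measure_congr h_paths, measure_iUnion₀ (h_disjoint.mono fun _ _ h ↦ h.aedisjoint)
          fun w ↦ nullMeasurableSet_pathCylinder hmeas _, tsum_fintype]
    _ = ∑ _w : {w : DyckWord // w.semilength = k}, p ^ (k + 1) * q ^ k :=
        Finset.sum_congr rfl fun w _ ↦ by
          rw [measure_pathCylinder_passagePath hindep hup hdown, w.2]
    _ = catalan k * (p ^ (k + 1) * q ^ k) := by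
        rw [Finset.sum_const, Finset.card_univ, DyckWord.card_dyckWord_semilength_eq_catalan,
          nsmul_eq_mul]

end Probability

lemma ennreal_catalan_eq_mul_choose (k : ℕ) :
    (catalan k : ENNReal) = 1 / (k + 1) * ((2 * k).choose k : ENNReal) := by
  have h : ((k : ENNReal) + 1) * catalan k = (2 * k).choose k := by
    exact_mod_cast succ_mul_catalan_eq_centralBinom k
  rw [← h, ← mul_assoc, one_div, ENNReal.inv_mul_cancel (by simp) (by finiteness), one_mul]

lemma ennreal_half_pow_mul_half_pow (k : ℕ) :
    (1 / 2 : ENNReal) ^ (k + 1) * (1 / 2) ^ k = 1 / (2 * 4 ^ k) := by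
  rw [← pow_add, one_div, one_div, ← ENNReal.inv_pow, show k + 1 + k = 2 * k + 1 by ring, pow_succ',
    pow_mul]
  norm_num

/-- For every k ≥ 0, P(τ = 2k+1) = (1/(2·4ᵏ)) · (1/(k+1)) · C(2k, k),
the k-th Catalan number divided by 2^(2k+1). -/
theorem prob_tau_eq
{Ω : Type*} [MeasurableSpace Ω] (P : Measure Ω) [IsProbabilityMeasure P]
    (X : ℕ → Ω → ℤ) (hmeas : ∀ i, Measurable (X i))
    (hindep : iIndepFun X P)
    (hheads : ∀ i, P {ω | X i ω = 1} = 1/2)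
    (htails : ∀ i, P {ω | X i ω = -1} = 1/2)
    (τ : Ω → ℕ) (hτ : ∀ ω, τ ω = sInf {n | 1 ≤ n ∧ (∑ i ∈ Finset.range n, X i ω) = 1}) :
    ∀ k : ℕ, P {ω | τ ω = 2 * k + 1} =
      (1 / (2 * 4 ^ k)) * (1 / (k + 1)) * ((2 * k).choose k : ENNReal) := by
  intro k
  rw [prob_tau_eq_general (fun i ↦ (hmeas i).aemeasurable) hindep hheads htails
    (ENNReal.add_halves 1) hτ k, ennreal_half_pow_mul_half_pow, mul_comm,
    ennreal_catalan_eq_mul_choose, mul_assoc]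
end

section
/- The probabilities P(τ = 2k+1) sum to 1: ∑_{k≥0} C(2k, k)/((k+1) · 2^{2k+1}) = 1, where C(2k, k) denotes the central binomial coefficient. -/
/-!
Telescoping: `centralBinom n / 4 ^ n` is the probability that a simple symmetric random walk started
at `0` does not visit `-1` in its first `2 * n` steps, so its successive differences are the
probabilities `catalan n / 2 ^ (2 * n + 1)` that the first visit happens at time `2 * n + 1`.
Their sum is `1` because `centralBinom n / 4 ^ n` starts at `1` and tends to `0`: the recurrence for
`centralBinom` makes `(2 * n + 1) * (centralBinom n / 4 ^ n) ^ 2` nonincreasing.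
-/

open Filter Finset Topology
open Nat (centralBinom)

section Telescoping

theorem centralBinom_succ_add_two_mul_catalan (n : ℕ) :
    centralBinom (n + 1) + 2 * catalan n = 4 * centralBinom n := by
  refine Nat.eq_of_mul_eq_mul_left (show 0 < n + 1 by positivity) ?_
  linear_combination Nat.succ_mul_centralBinom_succ n + 2 * succ_mul_catalan_eq_centralBinom n

variable {K : Type*} [Field K]

theorem catalan_div_two_pow_eq_sub [NeZero (2 : K)] (n : ℕ) :
    (catalan n : K) / 2 ^ (2 * n + 1) =
      centralBinom n / 4 ^ n - centralBinom (n + 1) / 4 ^ (n + 1) := by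
  have h_rec : (centralBinom (n + 1) + 2 * catalan n : K) = 4 * centralBinom n := by
    simpa using congr_arg (Nat.cast (R := K)) (centralBinom_succ_add_two_mul_catalan n)
  have h_two : (2 : K) ≠ 0 := two_ne_zero
  have h_four : (4 : K) ≠ 0 := by
    convert pow_ne_zero 2 h_two using 1
    norm_num
  have h_pow : (2 : K) ^ (2 * n + 1) = 2 * 4 ^ n := by
    rw [pow_succ', pow_mul]
    norm_num
  rw [h_pow, pow_succ]
  field_simp
  linear_combination 2 * h_rec

theorem sum_range_catalan_div_two_pow [NeZero (2 : K)] (n : ℕ) :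
    ∑ k ∈ range n, (catalan k : K) / 2 ^ (2 * k + 1) = 1 - centralBinom n / 4 ^ n := by
  simp_rw [catalan_div_two_pow_eq_sub]
  rw [sum_range_sub' fun k ↦ (centralBinom k : K) / 4 ^ k]
  simp

theorem cast_catalan_eq_choose_div [CharZero K] (n : ℕ) :
    (catalan n : K) = (2 * n).choose n / (n + 1) := by
  rw [eq_div_iff n.cast_add_one_ne_zero, mul_comm, ← Nat.centralBinom_eq_two_mul_choose]
  exact_mod_cast succ_mul_catalan_eq_centralBinom n

end Telescoping

theorem two_mul_add_one_mul_centralBinom_sq_le (n : ℕ) :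
    (2 * n + 1) * centralBinom n ^ 2 ≤ (4 ^ n) ^ 2 := by
  induction n with
  | zero => simp
  | succ n ih =>
    have h_factor : (2 * n + 1) * (2 * n + 3) ≤ 4 * (n + 1) ^ 2 := by linarith
    refine Nat.le_of_mul_le_mul_left ?_ (pow_pos n.succ_pos 2)
    calc (n + 1) ^ 2 * ((2 * (n + 1) + 1) * centralBinom (n + 1) ^ 2)
        = (2 * n + 3) * ((n + 1) * centralBinom (n + 1)) ^ 2 := by ring
      _ = (2 * n + 3) * (2 * (2 * n + 1) * centralBinom n) ^ 2 := by
          rw [Nat.succ_mul_centralBinom_succ]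
      _ = 4 * ((2 * n + 1) * (2 * n + 3)) * ((2 * n + 1) * centralBinom n ^ 2) := by ring
      _ ≤ 4 * (4 * (n + 1) ^ 2) * (4 ^ n) ^ 2 := by gcongr
      _ = (n + 1) ^ 2 * (4 ^ (n + 1)) ^ 2 := by ring

theorem centralBinom_div_four_pow_le (n : ℕ) :
    (centralBinom n : ℝ) / 4 ^ n ≤ 1 / √(2 * n + 1) := by
  have h_sq : (2 * n + 1 : ℝ) * centralBinom n ^ 2 ≤ (4 ^ n) ^ 2 :=
    mod_cast two_mul_add_one_mul_centralBinom_sq_le n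
  rw [div_le_div_iff₀ (by positivity) (by positivity), one_mul]
  refine le_of_sq_le_sq ?_ (by positivity)
  rwa [mul_pow, Real.sq_sqrt (by positivity), mul_comm]

theorem tendsto_centralBinom_div_four_pow :
    Tendsto (fun n : ℕ ↦ (centralBinom n : ℝ) / 4 ^ n) atTop (𝓝 0) := by
  have h_sqrt : Tendsto (fun n : ℕ ↦ √(2 * n + 1)) atTop atTop :=
    Real.tendsto_sqrt_atTop.comp <| tendsto_atTop_add_const_right _ _ <|
      tendsto_natCast_atTop_atTop.const_mul_atTop two_pos
  exact squeeze_zero (fun n ↦ by positivity) centralBinom_div_four_pow_le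
    (h_sqrt.const_div_atTop 1)

theorem hasSum_catalan_div_two_pow :
    HasSum (fun n : ℕ ↦ (catalan n : ℝ) / 2 ^ (2 * n + 1)) 1 := by
  rw [hasSum_iff_tendsto_nat_of_nonneg fun n ↦ by positivity]
  simp_rw [sum_range_catalan_div_two_pow]
  simpa using tendsto_centralBinom_div_four_pow.const_sub 1

/-- The probabilities P(τ = 2k+1) sum to 1:
∑_{k≥0} C(2k, k) / ((k+1) · 2^(2k+1)) = 1. -/
theorem catalan_prob_sum_one :
    ∑' k : ℕ, ((2 * k).choose k : ℝ) / ((k + 1) * 2 ^ (2 * k + 1)) = 1 := by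
  simp_rw [← div_div, ← cast_catalan_eq_choose_div]
  exact hasSum_catalan_div_two_pow.tsum_eq
end

section
/- The expected value of the proportion of heads at the stopping time τ equals π/4: E[H_τ/τ] = π/4. -/
open MeasureTheory ProbabilityTheory Real
open scoped Classical

/-!
Let trials succeed independently with probability `p`. By reflection, successes first outnumber
failures at time `2k + 1` with probability `C_k p^(k+1) (1-p)^k`, where `C_k` is the Catalan number.
At that time `k + 1` of the `2k + 1` trials are successes, and `(k + 1) C_k` is the central binomial
coefficient, so the expected proportion of successes is the sum of
`binom(2k, k) p^(k+1) (1-p)^k / (2k + 1)`, an arcsine series at `√(4p(1-p))`. For `p = 1/2` this is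
the endpoint `1`; the series is obtained up to the endpoint by substituting `y = sin² t` in the
binomial series of `(1 - y)^(-1/2)` and integrating against `cos t`.
-/

section ArcsineSeries

lemma multichoose_one_half {K : Type*} [Field K] [CharZero K] (k : ℕ) :
    Ring.multichoose (1 / 2 : K) k = k.centralBinom / 4 ^ k := by
  have factorial_mul (j : ℕ) :
      (j.factorial : K) * Ring.multichoose (1 / 2 : K) j = (ascPochhammer K j).eval (1 / 2) := by
    rw [← nsmul_eq_mul, Ring.factorial_nsmul_multichoose_eq_ascPochhammer,
      Polynomial.ascPochhammer_smeval_eq_eval]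
  induction k with
  | zero => simp
  | succ k ih =>
    have hcentral : ((k : K) + 1) * (k + 1).centralBinom = 2 * (2 * k + 1) * k.centralBinom := by
      exact_mod_cast Nat.succ_mul_centralBinom_succ k
    have hrec := factorial_mul (k + 1)
    rw [ascPochhammer_succ_eval, ← factorial_mul k, ih, Nat.factorial_succ] at hrec
    have hfact : (k.factorial : K) ≠ 0 := by exact_mod_cast k.factorial_ne_zero
    have hk : (k : K) + 1 ≠ 0 := by exact_mod_cast k.succ_ne_zero
    push_cast at hrec
    field_simp at hrec
    rw [eq_div_iff (by simp)]
    apply mul_left_cancel₀ hk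
    rw [pow_succ]
    linear_combination 2 * hrec - hcentral

lemma hasSum_centralBinom_mul_pow {y : ℝ} (hy : |y| < 1) :
    HasSum (fun k : ℕ ↦ (k.centralBinom : ℝ) / 4 ^ k * y ^ k) (1 / √(1 - y)) := by
  have h := (one_div_one_sub_rpow_hasFPowerSeriesOnBall_zero (1 / 2)).hasSum (y := y)
    (by simpa [enorm_eq_nnnorm, ← NNReal.coe_lt_coe] using hy)
  simpa only [FormalMultilinearSeries.ofScalars_apply_eq, ← Ring.multichoose_eq,
    multichoose_one_half, zero_add, ← sqrt_eq_rpow, smul_eq_mul] using h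

lemma hasSum_centralBinom_mul_sin_pow_mul_cos {t : ℝ} (ht : 0 < cos t) :
    HasSum (fun k : ℕ ↦ (k.centralBinom : ℝ) / 4 ^ k * (sin t ^ (2 * k) * cos t)) 1 := by
  have hsin : |sin t ^ 2| < 1 := by
    rw [abs_of_nonneg (sq_nonneg _)]
    nlinarith [sin_sq_add_cos_sq t]
  have h := (hasSum_centralBinom_mul_pow hsin).mul_right (cos t)
  rw [← cos_sq', sqrt_sq ht.le, one_div_mul_cancel ht.ne'] at h
  simpa only [pow_mul, mul_assoc] using h

lemma ae_uIoc_zero_cos_pos {u : ℝ} (hu : |u| ≤ π / 2) :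
    ∀ᵐ t : ℝ, t ∈ Set.uIoc 0 u → 0 < cos t := by
  have hne : ∀ᵐ t : ℝ, t ≠ π / 2 := by simp [ae_iff]
  filter_upwards [hne] with t ht htu
  obtain ⟨hlo, hhi⟩ := abs_le.mp hu
  rw [Set.mem_uIoc] at htu
  have hle : t ≤ π / 2 := by rcases htu with h | h <;> linarith [h.2, pi_pos]
  exact cos_pos_of_mem_Ioo ⟨by rcases htu with h | h <;> linarith [h.1, pi_pos],
    hle.lt_of_ne ht⟩

lemma integral_sin_pow_two_mul_mul_cos (u : ℝ) (k : ℕ) :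
    ∫ t in (0 : ℝ)..u, sin t ^ (2 * k) * cos t = sin u ^ (2 * k + 1) / (2 * k + 1) := by
  simpa using integral_sin_pow_mul_cos_pow_odd (a := 0) (b := u) (2 * k) 0

lemma hasSum_centralBinom_mul_sin_pow {u : ℝ} (hu : |u| ≤ π / 2) :
    HasSum (fun k : ℕ ↦ (k.centralBinom : ℝ) / 4 ^ k * (sin u ^ (2 * k + 1) / (2 * k + 1))) u := by
  let F (k : ℕ) (t : ℝ) : ℝ := k.centralBinom / 4 ^ k * (sin t ^ (2 * k) * cos t)
  have hcos := ae_uIoc_zero_cos_pos hu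
  have hone : ∀ᵐ t : ℝ, t ∈ Set.uIoc 0 u → HasSum (F · t) 1 := by
    filter_upwards [hcos] with t ht htu using hasSum_centralBinom_mul_sin_pow_mul_cos (ht htu)
  have hF (k : ℕ) : ∀ᵐ t : ℝ, t ∈ Set.uIoc 0 u → ‖F k t‖ ≤ F k t := by
    filter_upwards [hcos] with t ht htu
    have := ht htu
    have := (even_two_mul k).pow_nonneg (sin t)
    exact (norm_of_nonneg (by positivity)).le
  have hbound : IntervalIntegrable (fun t ↦ ∑' k, F k t) volume 0 u := by
    refine (intervalIntegrable_const (c := (1 : ℝ))).congr_ae ?_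
    rw [Filter.EventuallyEq, ae_restrict_iff' measurableSet_uIoc]
    filter_upwards [hone] with t ht htu using (ht htu).tsum_eq.symm
  have h := intervalIntegral.hasSum_integral_of_dominated_convergence F
    (fun k ↦ (by fun_prop : Continuous (F k)).aestronglyMeasurable) hF
    (by filter_upwards [hone] with t ht htu using (ht htu).summable) hbound hone
  simpa only [F, intervalIntegral.integral_const_mul, integral_sin_pow_two_mul_mul_cos,
    intervalIntegral.integral_const, sub_zero, smul_eq_mul, mul_one] using h

lemma hasSum_arcsin {x : ℝ} (hx : |x| ≤ 1) :
    HasSum (fun k : ℕ ↦ (k.centralBinom : ℝ) / 4 ^ k * (x ^ (2 * k + 1) / (2 * k + 1)))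
      (arcsin x) := by
  obtain ⟨hlo, hhi⟩ := abs_le.mp hx
  have h := hasSum_centralBinom_mul_sin_pow
    (abs_le.mpr ⟨neg_pi_div_two_le_arcsin x, arcsin_le_pi_div_two x⟩)
  rwa [sin_arcsin hlo hhi] at h

lemma hasSum_arcsin_sqrt_div_sqrt {y : ℝ} (hy₀ : 0 < y) (hy₁ : y ≤ 1) :
    HasSum (fun k : ℕ ↦ (k.centralBinom : ℝ) / 4 ^ k * y ^ k / (2 * k + 1))
      (arcsin √y / √y) := by
  have hsqrt : |√y| ≤ 1 := by rwa [abs_of_nonneg (sqrt_nonneg y), sqrt_le_one]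
  refine ((hasSum_arcsin hsqrt).div_const √y).congr_fun fun k ↦ ?_
  rw [pow_succ, pow_mul, sq_sqrt hy₀.le]
  field_simp

lemma hasSum_centralBinom_mul_pow_mul_pow {p : ℝ} (hp₀ : 0 < p) (hp₁ : p < 1) :
    HasSum (fun k : ℕ ↦ (k.centralBinom : ℝ) * p ^ (k + 1) * (1 - p) ^ k / (2 * k + 1))
      (p * arcsin √(4 * p * (1 - p)) / √(4 * p * (1 - p))) := by
  have hpos : 0 < 4 * p * (1 - p) := mul_pos (by linarith) (by linarith)
  have hle : 4 * p * (1 - p) ≤ 1 := by linarith [sq_nonneg (2 * p - 1)]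
  rw [mul_div_assoc]
  refine ((hasSum_arcsin_sqrt_div_sqrt hpos hle).mul_left p).congr_fun fun k ↦ ?_
  rw [mul_pow, mul_pow, pow_succ]
  field_simp

end ArcsineSeries

lemma catalan_add_choose_succ (k : ℕ) :
    catalan k + (2 * k).choose (k + 1) = (2 * k).choose k := by
  have hcatalan := succ_mul_catalan_eq_centralBinom k
  have hsucc := Nat.choose_succ_right_eq (2 * k) k
  rw [Nat.centralBinom_eq_two_mul_choose] at hcatalan
  rw [show 2 * k - k = k by lia] at hsucc
  apply Nat.eq_of_mul_eq_mul_left k.succ_pos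
  linarith

section FirstLead

variable {Ω : Type*} {s : ℕ → Set Ω} {n h : ℕ} {ω : Ω}

/-- The number of the trials `0, …, n - 1` that succeed at `ω`, where `s i` is the event that
trial `i` succeeds. -/
noncomputable def successCount (s : ℕ → Set Ω) (n : ℕ) (ω : Ω) : ℕ :=
  ∑ i ∈ Finset.range n, (s i).indicator 1 ω

/-- The event that the first `n` trials contain exactly `h` successes and that successes never
outnumber failures during them. Failures are not counted separately: after `m` trials
there are at most as many successes as failures iff `2 * successCount s m ω ≤ m`. -/
def ballotEvent (s : ℕ → Set Ω) (n h : ℕ) : Set Ω :=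
  {ω | (∀ m ≤ n, 2 * successCount s m ω ≤ m) ∧ successCount s n ω = h}

/-- The first time at which successes outnumber failures (necessarily by one), with the value `0`
if this never happens. -/
noncomputable def firstLead (s : ℕ → Set Ω) (ω : Ω) : ℕ :=
  sInf {n | 2 * successCount s n ω = n + 1}

lemma successCount_zero : successCount s 0 ω = 0 := Finset.sum_range_zero _

lemma successCount_succ_of_mem (hω : ω ∈ s n) :
    successCount s (n + 1) ω = successCount s n ω + 1 := by
  simp [successCount, Finset.sum_range_succ, hω]

lemma successCount_succ_of_notMem (hω : ω ∉ s n) :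
    successCount s (n + 1) ω = successCount s n ω := by
  simp [successCount, Finset.sum_range_succ, hω]

lemma measurable_successCount [MeasurableSpace Ω] (hs : ∀ i < n, MeasurableSet (s i)) :
    Measurable (successCount s n) :=
  Finset.measurable_fun_sum _ fun i hi ↦ measurable_one.indicator (hs i (Finset.mem_range.mp hi))

lemma measurableSet_ballotEvent [MeasurableSpace Ω] (hs : ∀ i < n, MeasurableSet (s i)) :
    MeasurableSet (ballotEvent s n h) := by
  have hcount (m : ℕ) (hm : m ≤ n) : Measurable (successCount s m) :=
    measurable_successCount fun i hi ↦ hs i (hi.trans_le hm)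
  simp only [ballotEvent, Set.ofPred_and, Set.ofPred_forall]
  refine .inter (.iInter fun m ↦ .iInter fun hm ↦ ?_) ?_
  · exact measurableSet_le ((hcount m hm).const_mul 2) measurable_const
  · exact hcount n le_rfl (measurableSet_singleton h)

lemma ballotEvent_eq_empty_of_lt (hn : n < 2 * h) : ballotEvent s n h = ∅ := by
  refine Set.eq_empty_of_forall_notMem fun ω hω ↦ ?_
  have := hω.1 n le_rfl
  rw [hω.2] at this
  lia

lemma ballotEvent_zero_zero : ballotEvent s 0 0 = Set.univ := by
  simp [ballotEvent, successCount_zero]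

lemma ballotEvent_succ_diff : ballotEvent s (n + 1) h \ s n = ballotEvent s n h \ s n := by
  ext ω
  refine and_congr_left fun hω ↦ ?_
  have hsucc := successCount_succ_of_notMem hω
  refine ⟨fun ⟨hle, hcount⟩ ↦ ⟨fun m hm ↦ hle m (by lia), by lia⟩,
    fun ⟨hle, hcount⟩ ↦ ⟨fun m hm ↦ ?_, by lia⟩⟩
  obtain hm | rfl := Nat.le_succ_iff.mp hm
  · exact hle m hm
  · have := hle n le_rfl
    lia

lemma ballotEvent_succ_zero_inter : ballotEvent s (n + 1) 0 ∩ s n = ∅ := by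
  refine Set.eq_empty_of_forall_notMem fun ω ⟨⟨_, hcount⟩, hω⟩ ↦ ?_
  rw [successCount_succ_of_mem hω] at hcount
  lia

lemma ballotEvent_succ_succ_inter (hh : 2 * (h + 1) ≤ n + 1) :
    ballotEvent s (n + 1) (h + 1) ∩ s n = ballotEvent s n h ∩ s n := by
  ext ω
  refine and_congr_left fun hω ↦ ?_
  have hsucc := successCount_succ_of_mem hω
  refine ⟨fun ⟨hle, hcount⟩ ↦ ⟨fun m hm ↦ hle m (by lia), by lia⟩,
    fun ⟨hle, hcount⟩ ↦ ⟨fun m hm ↦ ?_, by lia⟩⟩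
  obtain hm | rfl := Nat.le_succ_iff.mp hm
  · exact hle m hm
  · lia

lemma two_mul_successCount_le (hne : ∀ m ≤ n, 2 * successCount s m ω ≠ m + 1) :
    ∀ m ≤ n, 2 * successCount s m ω ≤ m := by
  intro m hm
  induction m with
  | zero => simp [successCount_zero]
  | succ m ih =>
    have hle := ih (by lia)
    have hne := hne (m + 1) hm
    by_cases hω : ω ∈ s m
    · rw [successCount_succ_of_mem hω] at hne ⊢
      lia
    · rw [successCount_succ_of_notMem hω]
      lia

lemma two_mul_successCount_firstLead (hω : firstLead s ω ≠ 0) :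
    2 * successCount s (firstLead s ω) ω = firstLead s ω + 1 :=
  Nat.sInf_mem (Nat.nonempty_of_sInf_eq_succ (Nat.succ_pred_eq_of_ne_zero hω).symm)

lemma two_mul_successCount_ne_of_lt_firstLead (hn : n < firstLead s ω) :
    2 * successCount s n ω ≠ n + 1 :=
  fun h ↦ Nat.notMem_of_lt_sInf hn h

lemma firstLead_preimage_two_mul_add_one (k : ℕ) :
    firstLead s ⁻¹' {2 * k + 1} = ballotEvent s (2 * k) k ∩ s (2 * k) := by
  ext ω
  constructor
  · intro hω
    rw [Set.mem_preimage, Set.mem_singleton_iff] at hω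
    have hlead := two_mul_successCount_firstLead (s := s) (ω := ω) (by lia)
    rw [hω] at hlead
    have hle := two_mul_successCount_le (s := s) (ω := ω) (n := 2 * k) fun m hm ↦
      two_mul_successCount_ne_of_lt_firstLead (by lia)
    have hle_last := hle (2 * k) le_rfl
    by_cases hmem : ω ∈ s (2 * k)
    · rw [successCount_succ_of_mem hmem] at hlead
      exact ⟨⟨hle, by lia⟩, hmem⟩
    · rw [successCount_succ_of_notMem hmem] at hlead
      lia
  · rintro ⟨⟨hle, hcount⟩, hmem⟩
    refine IsLeast.csInf_eq ⟨?_, fun m hm ↦ ?_⟩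
    · rw [Set.mem_ofPred_eq, successCount_succ_of_mem hmem, hcount]
      ring
    · by_contra! hlt
      have := hle m (by lia)
      rw [Set.mem_ofPred_eq] at hm
      lia

lemma successCount_firstLead_div_eq_tsum (s : ℕ → Set Ω) (ω : Ω) :
    (successCount s (firstLead s ω) ω : ℝ) / firstLead s ω =
      ∑' k : ℕ, (firstLead s ⁻¹' {2 * k + 1}).indicator
        (fun _ ↦ ((k : ℝ) + 1) / (2 * k + 1)) ω := by
  by_cases hω : firstLead s ω = 0
  · simp [Set.indicator, hω]
  have hlead := two_mul_successCount_firstLead hω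
  obtain ⟨k, hk⟩ : ∃ k, firstLead s ω = 2 * k + 1 := ⟨successCount s (firstLead s ω) ω - 1, by lia⟩
  rw [tsum_eq_single k fun j hj ↦ Set.indicator_of_notMem (by simpa [hk] using hj.symm) _,
    Set.indicator_of_mem (by simpa using hk),
    show successCount s (firstLead s ω) ω = k + 1 by lia, hk]
  push_cast
  rfl

end FirstLead

section Law

variable {Ω : Type*} [MeasurableSpace Ω] {P : Measure Ω} {s : ℕ → Set Ω} {p : ℝ}
  {n h : ℕ}

lemma measureReal_ballotEvent_inter (hsm : ∀ i, MeasurableSet (s i)) (hs : iIndepSet s P) :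
    P.real (ballotEvent s n h ∩ s n) = P.real (ballotEvent s n h) * P.real (s n) := by
  have hpast : MeasurableSet[.generateFrom {t | ∃ j < n, s j = t}] (ballotEvent s n h) :=
    @measurableSet_ballotEvent _ _ _ _ (_) fun i hi ↦ .basic _ ⟨i, hi, rfl⟩
  have hindep := (Indep_iff _ _ P).mp (hs.indep_generateFrom_lt hsm n) (s n) _
    (.basic _ rfl) hpast
  rw [Set.inter_comm, mul_comm, measureReal_def, hindep, ENNReal.toReal_mul]
  rfl

lemma measureReal_ballotEvent_diff (hsm : ∀ i, MeasurableSet (s i)) (hs : iIndepSet s P) :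
    P.real (ballotEvent s n h \ s n) = P.real (ballotEvent s n h) * (1 - P.real (s n)) := by
  have := hs.isProbabilityMeasure
  have hsplit := measureReal_inter_add_sdiff (μ := P) (s := ballotEvent s n h) (hsm n)
  rw [measureReal_ballotEvent_inter hsm hs] at hsplit
  linear_combination hsplit

/- The subtracted binomial coefficient counts, by reflection, the outcomes with `h` successes in
which successes outnumber failures at some point. The formula satisfies the last-trial recursion by
Pascal's rule, and vanishes on the boundary `2 * h = n + 1` as `ballotEvent` does. -/
lemma measureReal_ballotEvent (hsm : ∀ i, MeasurableSet (s i)) (hs : iIndepSet s P)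
    (hp : ∀ i, P.real (s i) = p) (hh : 2 * h ≤ n + 1) :
    P.real (ballotEvent s n h) =
      (n.choose h - n.choose (n + 1 - h)) * p ^ h * (1 - p) ^ (n - h) := by
  have := hs.isProbabilityMeasure
  induction n generalizing h with
  | zero =>
    obtain rfl : h = 0 := by lia
    simp [ballotEvent_zero_zero]
  | succ n ih =>
    rw [← measureReal_inter_add_sdiff (hsm n), ballotEvent_succ_diff,
      measureReal_ballotEvent_diff hsm hs, hp]
    obtain _ | h := h
    · rw [ballotEvent_succ_zero_inter, ih (by lia)]
      simp [pow_succ]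
    obtain heq | hlt : 2 * (h + 1) = n + 2 ∨ 2 * (h + 1) ≤ n + 1 := by lia
    · rw [ballotEvent_eq_empty_of_lt (by lia), ballotEvent_eq_empty_of_lt (by lia),
        show n + 1 + 1 - (h + 1) = h + 1 by lia]
      simp
    · obtain ⟨d, rfl⟩ : ∃ d, n = h + 1 + d := ⟨n - (h + 1), by lia⟩
      rw [ballotEvent_succ_succ_inter hlt, measureReal_ballotEvent_inter hsm hs, hp,
        ih (by lia), ih hlt]
      simp only [show h + 1 + d + 1 + 1 - (h + 1) = d + 1 + 1 by lia,
        show h + 1 + d + 1 - h = d + 1 + 1 by lia, show h + 1 + d + 1 - (h + 1) = d + 1 by lia,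
        show h + 1 + d - h = d + 1 by lia, show h + 1 + d - (h + 1) = d by lia,
        Nat.choose_succ_succ, Nat.cast_add, pow_succ]
      ring

lemma measureReal_firstLead_preimage (hsm : ∀ i, MeasurableSet (s i)) (hs : iIndepSet s P)
    (hp : ∀ i, P.real (s i) = p) (k : ℕ) :
    P.real (firstLead s ⁻¹' {2 * k + 1}) = catalan k * p ^ (k + 1) * (1 - p) ^ k := by
  rw [firstLead_preimage_two_mul_add_one, measureReal_ballotEvent_inter hsm hs, hp,
    measureReal_ballotEvent hsm hs hp (by lia), show 2 * k + 1 - k = k + 1 by lia,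
    show 2 * k - k = k by lia, ← catalan_add_choose_succ]
  push_cast
  ring

end Law

section Expectation

variable {Ω : Type*} [MeasurableSpace Ω] {P : Measure Ω} {s : ℕ → Set Ω} {p : ℝ}

/- Where successes never lead, `firstLead` is `0` and the integrand is `0 / 0 = 0`; for `p < 1 / 2`
this is therefore the expectation restricted to the event that they eventually do. -/
lemma integral_successCount_firstLead_div (hsm : ∀ i, MeasurableSet (s i))
    (hs : iIndepSet s P) (hp : ∀ i, P.real (s i) = p) (hp₀ : 0 < p) (hp₁ : p < 1) :
    ∫ ω, (successCount s (firstLead s ω) ω : ℝ) / firstLead s ω ∂P =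
      p * arcsin √(4 * p * (1 - p)) / √(4 * p * (1 - p)) := by
  have := hs.isProbabilityMeasure
  let F (k : ℕ) : Ω → ℝ :=
    (firstLead s ⁻¹' {2 * k + 1}).indicator fun _ ↦ ((k : ℝ) + 1) / (2 * k + 1)
  have hmeas (k : ℕ) : MeasurableSet (firstLead s ⁻¹' {2 * k + 1}) := by
    rw [firstLead_preimage_two_mul_add_one]
    exact (measurableSet_ballotEvent fun i _ ↦ hsm i).inter (hsm _)
  have hF_nonneg (k : ℕ) (ω : Ω) : 0 ≤ F k ω := Set.indicator_nonneg (fun _ _ ↦ by positivity) ω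
  have hF_integral (k : ℕ) :
      ∫ ω, F k ω ∂P = k.centralBinom * p ^ (k + 1) * (1 - p) ^ k / (2 * k + 1) := by
    rw [integral_indicator_const _ (hmeas k), measureReal_firstLead_preimage hsm hs hp,
      ← succ_mul_catalan_eq_centralBinom, smul_eq_mul]
    push_cast
    ring
  have hseries := hasSum_centralBinom_mul_pow_mul_pow hp₀ hp₁
  have hF_hasSum := hasSum_integral_of_summable_integral_norm (μ := P) (F := F)
    (fun k ↦ (integrable_const _).indicator (hmeas k))
    (by simpa only [norm_of_nonneg (hF_nonneg _ _), hF_integral] using hseries.summable)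
  simp only [hF_integral] at hF_hasSum
  simp only [successCount_firstLead_div_eq_tsum]
  exact hF_hasSum.unique hseries

end Expectation

section CoinTossing

lemma sum_range_eq_two_mul_card_sub {x : ℕ → ℤ} (hx : ∀ i, x i = 1 ∨ x i = -1) (n : ℕ) :
    ∑ i ∈ Finset.range n, x i = 2 * ((Finset.range n).filter (x · = 1)).card - n := by
  induction n with
  | zero => simp
  | succ n ih =>
    rw [Finset.sum_range_succ, ih, Finset.range_add_one, Finset.filter_insert]
    rcases hx n with h | h <;> simp [h] <;> ring

variable {Ω : Type*}

lemma successCount_eq_card {X : ℕ → Ω → ℤ} (n : ℕ) (ω : Ω) :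
    successCount (fun i ↦ {ω | X i ω = 1}) n ω = ((Finset.range n).filter (X · ω = 1)).card := by
  simp only [successCount, Set.indicator_apply, Finset.card_filter, Set.mem_ofPred_eq, Pi.one_apply]

lemma firstLead_eq_sInf_sum_eq_one {X : ℕ → Ω → ℤ} {ω : Ω} (hω : ∀ i, X i ω = 1 ∨ X i ω = -1) :
    firstLead (fun i ↦ {ω | X i ω = 1}) ω =
      sInf {n | 1 ≤ n ∧ ∑ i ∈ Finset.range n, X i ω = 1} := by
  unfold firstLead
  congr 1 with n
  rw [Set.mem_ofPred_eq, Set.mem_ofPred_eq, successCount_eq_card, sum_range_eq_two_mul_card_sub hω]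
  obtain _ | n := n
  · simp
  · lia

variable [MeasurableSpace Ω] {P : Measure Ω}

lemma ae_eq_or_eq_of_measureReal_add_eq_one [IsProbabilityMeasure P] {E : Type*}
    [MeasurableSpace E] [MeasurableSingletonClass E] {Y : Ω → E} (hY : Measurable Y) {a b : E}
    (hab : a ≠ b) (h : P.real {ω | Y ω = a} + P.real {ω | Y ω = b} = 1) :
    ∀ᵐ ω ∂P, Y ω = a ∨ Y ω = b := by
  have hmeas (c : E) : MeasurableSet {ω | Y ω = c} := hY (measurableSet_singleton c)
  have hdisj : Disjoint {ω | Y ω = a} {ω | Y ω = b} :=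
    Set.disjoint_left.mpr fun ω ha hb ↦ hab (ha.symm.trans hb)
  rw [← measureReal_union hdisj (hmeas b), measureReal_def, ENNReal.toReal_eq_one_iff] at h
  exact (mem_ae_iff_prob_eq_one ((hmeas a).union (hmeas b))).mpr h

theorem expected_proportion_eq_pi_div_four_general {X : ℕ → Ω → ℤ} {p : ℝ}
    (hp₀ : 1 / 2 ≤ p) (hp₁ : p < 1) (hmeas : ∀ i, Measurable (X i)) (hindep : iIndepFun X P)
    (hheads : ∀ i, P.real {ω | X i ω = 1} = p) (htails : ∀ i, P.real {ω | X i ω = -1} = 1 - p)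
    {τ : Ω → ℕ} (hτ : ∀ ω, τ ω = sInf {n | 1 ≤ n ∧ (∑ i ∈ Finset.range n, X i ω) = 1})
    {H : ℕ → Ω → ℕ}
    (hH : ∀ n ω, H n ω = ((Finset.range n).filter (fun i => X i ω = 1)).card) :
    ∫ ω, ((H (τ ω) ω : ℝ) / (τ ω : ℝ)) ∂P =
      p * arcsin √(4 * p * (1 - p)) / √(4 * p * (1 - p)) := by
  have := hindep.isProbabilityMeasure
  let heads (i : ℕ) : Set Ω := {ω | X i ω = 1}
  have heads_meas (i : ℕ) : MeasurableSet (heads i) := hmeas i (measurableSet_singleton 1)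
  have heads_indep : iIndepSet heads P :=
    (iIndepSet_iff_meas_biInter heads_meas).mpr fun t ↦
      hindep.meas_biInter fun i _ ↦ ⟨{1}, measurableSet_singleton 1, rfl⟩
  have hX : ∀ᵐ ω ∂P, ∀ i, X i ω = 1 ∨ X i ω = -1 := ae_all_iff.mpr fun i ↦
    ae_eq_or_eq_of_measureReal_add_eq_one (hmeas i) (by decide) (by rw [hheads, htails]; ring)
  rw [← integral_successCount_firstLead_div heads_meas heads_indep hheads (by linarith) hp₁]
  refine integral_congr_ae ?_
  filter_upwards [hX] with ω hω
  rw [firstLead_eq_sInf_sum_eq_one hω, ← hτ, successCount_eq_card, ← hH]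

end CoinTossing

/-- The expected proportion of heads at the stopping time τ equals π/4. -/
theorem expected_proportion_eq_pi_div_four
{Ω : Type*} [MeasurableSpace Ω] (P : Measure Ω) [IsProbabilityMeasure P]
    (X : ℕ → Ω → ℤ) (hmeas : ∀ i, Measurable (X i))
    (hindep : iIndepFun X P)
    (hheads : ∀ i, P {ω | X i ω = 1} = 1/2)
    (htails : ∀ i, P {ω | X i ω = -1} = 1/2)
    (τ : Ω → ℕ) (hτ : ∀ ω, τ ω = sInf {n | 1 ≤ n ∧ (∑ i ∈ Finset.range n, X i ω) = 1})
(H : ℕ → Ω → ℕ)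
    (hH : ∀ n ω, H n ω = ((Finset.range n).filter (fun i => X i ω = 1)).card) :
    ∫ ω, ((H (τ ω) ω : ℝ) / (τ ω : ℝ)) ∂P = π / 4 := by
  rw [expected_proportion_eq_pi_div_four_general (p := 1 / 2) le_rfl one_half_lt_one hmeas hindep
    (by simp [measureReal_def, hheads]) (by norm_num [measureReal_def, htails]) hτ hH]
  have hone : (4 : ℝ) * (1 / 2) * (1 - 1 / 2) = 1 := by norm_num
  rw [hone, sqrt_one, arcsin_one]
  ring
end

section
/- For every real x with |x| ≤ 1, arcsin(x) = ∑_{n≥0} C(2n, n) · x^{2n+1} / (4^n · (2n+1)), where the series converges (including at the endpoints x = ±1). -/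
open Real

/-!
Term-by-term integration of the binomial series `1 / √(1 - t ^ 2) = ∑ C(2n, n) / 4 ^ n * t ^ (2n)`
over `[0, x]` gives the arcsine series. All terms are nonnegative and `1 / √(1 - t ^ 2)`, being the
derivative of the monotone continuous function `arcsin`, is integrable up to `t = ±1`; so monotone
convergence covers the endpoints `x = ±1` as well, with no appeal to Abel's limit theorem.
-/

section BinomialCoefficients

variable {K : Type*} [Field K] [CharZero K]

lemma ascPochhammer_eval_one_half (n : ℕ) :
    (ascPochhammer K n).eval (1 / 2) = n.factorial * (n.centralBinom / 4 ^ n) := by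
  induction n with
  | zero => simp
  | succ n ih =>
    have centralBinom_rec :
        ((n : K) + 1) * (n + 1).centralBinom = 2 * (2 * n + 1) * n.centralBinom := by
      exact_mod_cast n.succ_mul_centralBinom_succ
    rw [ascPochhammer_succ_eval, ih, Nat.factorial_succ, pow_succ]
    push_cast
    field_simp
    linear_combination (-2 * n.factorial : K) * centralBinom_rec

lemma multichoose_one_half_s10 [BinomialRing K] (n : ℕ) :
    Ring.multichoose (1 / 2 : K) n = n.centralBinom / 4 ^ n := by
  have factorial_ne_zero : (n.factorial : K) ≠ 0 := Nat.cast_ne_zero.mpr n.factorial_ne_zero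
  apply mul_left_cancel₀ factorial_ne_zero
  rw [← nsmul_eq_mul, Ring.factorial_nsmul_multichoose_eq_ascPochhammer,
    Polynomial.ascPochhammer_smeval_eq_eval, ascPochhammer_eval_one_half]

end BinomialCoefficients

lemma hasSum_one_div_sqrt_one_sub {x : ℝ} (hx : |x| < 1) :
    HasSum (fun n : ℕ => (n.centralBinom : ℝ) / 4 ^ n * x ^ n) (1 / √(1 - x)) := by
  have x_mem_ball : x ∈ Metric.eball (0 : ℝ) 1 := by
    simpa [← ENNReal.ofReal_one, Metric.eball_ofReal] using hx
  have binomial_series :=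
    (one_div_one_sub_rpow_hasFPowerSeriesOnBall_zero (1 / 2)).hasSum x_mem_ball
  simpa only [FormalMultilinearSeries.ofScalars_apply_eq, ← Ring.multichoose_eq,
    multichoose_one_half_s10, smul_eq_mul, zero_add, ← sqrt_eq_rpow] using binomial_series

section Integration

open MeasureTheory Set
open scoped Interval

lemma hasSum_intervalIntegral_of_nonneg {ι : Type*} [Countable ι] {μ : Measure ℝ} {a b : ℝ}
    {f : ι → ℝ → ℝ} {F : ℝ → ℝ}
    (hf_meas : ∀ i, AEStronglyMeasurable (f i) (μ.restrict (Ι a b)))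
    (hf_nonneg : ∀ i, ∀ᵐ t ∂μ, t ∈ Ι a b → 0 ≤ f i t)
    (hF : IntervalIntegrable F μ a b)
    (hsum : ∀ᵐ t ∂μ, t ∈ Ι a b → HasSum (fun i => f i t) (F t)) :
    HasSum (fun i => ∫ t in a..b, f i t ∂μ) (∫ t in a..b, F t ∂μ) := by
  refine intervalIntegral.hasSum_integral_of_dominated_convergence f hf_meas ?_ ?_ ?_ hsum
  · intro i
    filter_upwards [hf_nonneg i] with t ht hmem
    exact (norm_of_nonneg (ht hmem)).le
  · filter_upwards [hsum] with t ht hmem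
    exact (ht hmem).summable
  · refine hF.congr_ae ((ae_restrict_iff' measurableSet_uIoc).mpr ?_)
    filter_upwards [hsum] with t ht hmem
    exact (ht hmem).tsum_eq.symm

variable {a b : ℝ}

lemma hasDerivAt_arcsin_of_mem_Ioo {t : ℝ} (ha : a ∈ Icc (-1) 1) (hb : b ∈ Icc (-1) 1)
    (ht : t ∈ Ioo (min a b) (max a b)) : HasDerivAt arcsin (1 / √(1 - t ^ 2)) t :=
  hasDerivAt_arcsin ((le_min ha.1 hb.1).trans_lt ht.1).ne' (ht.2.trans_le (max_le ha.2 hb.2)).ne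

lemma intervalIntegrable_one_div_sqrt_one_sub_sq (ha : a ∈ Icc (-1) 1) (hb : b ∈ Icc (-1) 1) :
    IntervalIntegrable (fun t : ℝ => 1 / √(1 - t ^ 2)) volume a b :=
  intervalIntegral.intervalIntegrable_deriv_of_nonneg continuous_arcsin.continuousOn
    (fun _ => hasDerivAt_arcsin_of_mem_Ioo ha hb) (fun _ _ => by positivity)

lemma integral_one_div_sqrt_one_sub_sq (ha : a ∈ Icc (-1) 1) (hb : b ∈ Icc (-1) 1) :
    ∫ t in a..b, 1 / √(1 - t ^ 2) = arcsin b - arcsin a :=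
  intervalIntegral.integral_eq_sub_of_hasDeriv_right continuous_arcsin.continuousOn
    (fun _ ht => (hasDerivAt_arcsin_of_mem_Ioo ha hb ht).hasDerivWithinAt)
    (intervalIntegrable_one_div_sqrt_one_sub_sq ha hb)

lemma ae_abs_lt_one_of_mem_uIoc (ha : a ∈ Icc (-1) 1) (hb : b ∈ Icc (-1) 1) :
    ∀ᵐ t : ℝ, t ∈ Ι a b → |t| < 1 := by
  filter_upwards [Measure.ae_ne volume (1 : ℝ)] with t t_ne_one ⟨min_lt, le_max⟩
  exact abs_lt.mpr ⟨(le_min ha.1 hb.1).trans_lt min_lt,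
    (le_max.trans (max_le ha.2 hb.2)).lt_of_ne t_ne_one⟩

lemma hasSum_integral_one_div_sqrt_one_sub_sq (ha : a ∈ Icc (-1) 1) (hb : b ∈ Icc (-1) 1) :
    HasSum (fun n : ℕ => ∫ t in a..b, (n.centralBinom : ℝ) / 4 ^ n * (t ^ 2) ^ n)
      (∫ t in a..b, 1 / √(1 - t ^ 2)) := by
  refine hasSum_intervalIntegral_of_nonneg (fun n => by fun_prop)
    (fun n => .of_forall fun t _ => by positivity)
    (intervalIntegrable_one_div_sqrt_one_sub_sq ha hb) ?_
  filter_upwards [ae_abs_lt_one_of_mem_uIoc ha hb] with t abs_t_lt_one ht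
  apply hasSum_one_div_sqrt_one_sub
  rw [abs_sq]
  exact (sq_lt_one_iff_abs_lt_one t).mpr (abs_t_lt_one ht)

end Integration

/-- For every real x with |x| ≤ 1, the arcsine power series
∑_{n≥0} C(2n, n) · x^(2n+1) / (4ⁿ · (2n+1)) converges (including at x = ±1)
and its sum is arcsin x. -/
theorem arcsin_series (x : ℝ) (hx : |x| ≤ 1) :
    HasSum (fun n : ℕ => ((2 * n).choose n : ℝ) * x ^ (2 * n + 1) / (4 ^ n * (2 * n + 1)))
      (arcsin x) := by
  have zero_mem : (0 : ℝ) ∈ Set.Icc (-1) 1 := by norm_num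
  have integral_eq_arcsin : ∫ t in 0..x, 1 / √(1 - t ^ 2) = arcsin x := by
    rw [integral_one_div_sqrt_one_sub_sq zero_mem (abs_le.mp hx), arcsin_zero, sub_zero]
  have integral_term (n : ℕ) : ∫ t in 0..x, (n.centralBinom : ℝ) / 4 ^ n * (t ^ 2) ^ n =
      ((2 * n).choose n : ℝ) * x ^ (2 * n + 1) / (4 ^ n * (2 * n + 1)) := by
    simp only [← pow_mul, intervalIntegral.integral_const_mul, integral_pow,
      Nat.centralBinom_eq_two_mul_choose]
    push_cast
    rw [zero_pow (Nat.succ_ne_zero _), sub_zero, div_mul_div_comm]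
  simpa only [integral_term, integral_eq_arcsin] using
    hasSum_integral_one_div_sqrt_one_sub_sq zero_mem (abs_le.mp hx)
end

section
/- The expected proportion of heads at the stopping time satisfies the strict inequalities 3/4 < E[H_τ/τ] < 1; combined with E[H_τ/τ] = π/4, this yields a probabilistic proof that 3 < π < 4. -/
open MeasureTheory ProbabilityTheory Real
open scoped Classical

/-! If `τ` is finite then `H_τ / τ = (1 + 1 / τ) / 2`, since `S_n = 2 H_n - n` and `S_τ = 1`. When
the first toss is heads the ratio is `1`; otherwise `1 < τ` and the ratio lies strictly between
`1 / 2` and `1`. The bounds follow by averaging over the first toss. That `τ` is almost surely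
finite comes from martingale convergence: a martingale with bounded increments that is bounded
above converges, which is impossible for increments `±1`. -/

section Paths

variable {x : ℕ → ℤ} {a : ℤ}

/-- The number of heads (steps `+1`) among the first `n` steps of the path with increments `x`. -/
def headCount (x : ℕ → ℤ) (n : ℕ) : ℕ :=
  ((Finset.range n).filter (fun i => x i = 1)).card

/-- The first passage time of level `a`, at a time at least `1`, of the path with increments `x`.
It is `0` when the level is never reached. -/
noncomputable def passageTime (x : ℕ → ℤ) (a : ℤ) : ℕ :=
  sInf {n | 1 ≤ n ∧ ∑ i ∈ Finset.range n, x i = a}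

/-- The proportion `H_τ / τ` of heads at the first passage time `τ` of level `1`. It is `0` when
level `1` is never reached. -/
noncomputable def headProportion (x : ℕ → ℤ) : ℝ :=
  headCount x (passageTime x 1) / passageTime x 1

theorem headCount_le (x : ℕ → ℤ) (n : ℕ) : headCount x n ≤ n :=
  (Finset.card_filter_le _ _).trans (Finset.card_range n).le

theorem sum_range_eq_two_mul_headCount_sub (hx : ∀ i, x i = 1 ∨ x i = -1) (n : ℕ) :
    ∑ i ∈ Finset.range n, x i = 2 * headCount x n - n := by
  have step (i : ℕ) : x i = 2 * (if x i = 1 then 1 else 0) - 1 := by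
    rcases hx i with h | h <;> simp [h]
  calc ∑ i ∈ Finset.range n, x i
      = ∑ i ∈ Finset.range n, (2 * (if x i = 1 then 1 else 0) - 1) :=
        Finset.sum_congr rfl fun i _ => step i
    _ = 2 * headCount x n - n := by
        simp only [Finset.sum_sub_distrib, ← Finset.mul_sum, headCount, Finset.natCast_card_filter,
          Finset.sum_const, Finset.card_range, nsmul_eq_mul, mul_one]

theorem headCount_div_eq (hx : ∀ i, x i = 1 ∨ x i = -1) {n : ℕ} (hn : n ≠ 0) :
    (headCount x n / n : ℝ) = (1 + (∑ i ∈ Finset.range n, x i : ℤ) / n) / 2 := by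
  rw [sum_range_eq_two_mul_headCount_sub hx]
  push_cast
  field

theorem exists_sum_range_eq_of_le (hx : ∀ i, x i ≤ 1) (ha : 0 ≤ a)
    (h : ∃ n, a ≤ ∑ i ∈ Finset.range n, x i) : ∃ n, ∑ i ∈ Finset.range n, x i = a := by
  obtain ⟨n, hn⟩ := h
  induction n with
  | zero => exact ⟨0, le_antisymm (by simpa using ha) hn⟩
  | succ n ih =>
    by_cases h' : a ≤ ∑ i ∈ Finset.range n, x i
    · exact ih h'
    · rw [Finset.sum_range_succ] at hn
      exact ⟨n + 1, by rw [Finset.sum_range_succ]; linarith [hx n]⟩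

theorem passageTime_spec (hx : ∀ i, x i ≤ 1) (ha : 0 < a)
    (h : ∃ n, a ≤ ∑ i ∈ Finset.range n, x i) :
    1 ≤ passageTime x a ∧ ∑ i ∈ Finset.range (passageTime x a), x i = a := by
  obtain ⟨n, hn⟩ := exists_sum_range_eq_of_le hx ha.le h
  refine Nat.sInf_mem (s := {n | 1 ≤ n ∧ ∑ i ∈ Finset.range n, x i = a}) ⟨n, ?_, hn⟩
  rw [Nat.one_le_iff_ne_zero]
  rintro rfl
  simp [ha.ne] at hn

theorem passageTime_apply_zero (x : ℕ → ℤ) : passageTime x (x 0) = 1 :=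
  le_antisymm (Nat.sInf_le ⟨le_rfl, by simp⟩)
    (Nat.sInf_mem (s := {n | 1 ≤ n ∧ ∑ i ∈ Finset.range n, x i = x 0}) ⟨1, le_rfl, by simp⟩).1

theorem headProportion_nonneg (x : ℕ → ℤ) : 0 ≤ headProportion x :=
  div_nonneg (Nat.cast_nonneg _) (Nat.cast_nonneg _)

theorem headProportion_le_one (x : ℕ → ℤ) : headProportion x ≤ 1 :=
  div_le_one_of_le₀ (Nat.cast_le.2 (headCount_le x _)) (Nat.cast_nonneg _)

theorem headProportion_eq_one (h : x 0 = 1) : headProportion x = 1 := by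
  have hτ : passageTime x 1 = 1 := h ▸ passageTime_apply_zero x
  simp [headProportion, hτ, headCount, Finset.filter_singleton, h]

theorem headProportion_mem_Ioo (hx : ∀ i, x i = 1 ∨ x i = -1)
    (hreach : ∃ n, 1 ≤ ∑ i ∈ Finset.range n, x i) (h0 : x 0 ≠ 1) :
    headProportion x ∈ Set.Ioo (1 / 2) 1 := by
  obtain ⟨hpos, hsum⟩ := passageTime_spec (fun i => by rcases hx i with h | h <;> omega)
    one_pos hreach
  have hne : passageTime x 1 ≠ 1 := fun h => h0 (by simpa [h] using hsum)
  have hlt : (1 : ℝ) < passageTime x 1 := by exact_mod_cast hpos.lt_of_ne' hne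
  have hinv_pos : 0 < 1 / (passageTime x 1 : ℝ) := by positivity
  have hinv_lt : 1 / (passageTime x 1 : ℝ) < 1 := (div_lt_one (by positivity)).2 hlt
  rw [headProportion, headCount_div_eq hx (by omega), hsum, Int.cast_one]
  constructor <;> linarith

end Paths

section Measurability

theorem measurable_sInf_nat {α : Type*} [MeasurableSpace α] {p : α → ℕ → Prop}
    (hp : ∀ n, MeasurableSet {x | p x n}) : Measurable fun x => sInf {n | p x n} := by
  -- Letting every `n` qualify when no `n` satisfies `p x` turns the junk value `0` into a minimum.
  have hq (x : α) : ∃ n, p x n ∨ ∀ m, ¬ p x m := by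
    by_cases h : ∃ n, p x n
    · exact h.imp fun _ => Or.inl
    · exact ⟨0, Or.inr (not_exists.1 h)⟩
  have hfind (x : α) : sInf {n | p x n} = Nat.find (hq x) := by
    by_cases h : ∃ n, p x n
    · have hnot : ¬ ∀ m, ¬ p x m := not_forall_not.2 h
      simp only [hnot, or_false]
      exact Nat.sInf_def h
    · rw [(Nat.find_eq_zero (hq x)).2 (Or.inr (not_exists.1 h))]
      simp [not_exists.1 h]
  have hnone : MeasurableSet {x | ∀ n, ¬ p x n} := by
    simpa only [Set.ofPred_forall] using .iInter fun n => (hp n).compl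
  simp only [hfind]
  exact measurable_find hq fun n => (hp n).union hnone

theorem measurable_passageTime (a : ℤ) : Measurable fun x : ℕ → ℤ => passageTime x a :=
  measurable_sInf_nat fun n => (MeasurableSet.const (1 ≤ n)).inter <|
    (Finset.measurable_sum _ fun i _ => measurable_pi_apply i) (measurableSet_singleton a)

theorem measurable_headCount (n : ℕ) : Measurable fun x : ℕ → ℤ => headCount x n := by
  simp only [headCount, Finset.card_filter]
  exact Finset.measurable_sum _ fun i _ => Measurable.ite
    (measurable_pi_apply i (measurableSet_singleton 1)) measurable_const measurable_const

theorem measurable_headProportion : Measurable headProportion := by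
  have hcount : Measurable fun q : (ℕ → ℤ) × ℕ => headCount q.1 q.2 :=
    measurable_from_prod_countable_left measurable_headCount
  have hτ := measurable_passageTime 1
  exact (measurable_from_nat.comp (hcount.comp (measurable_id.prodMk hτ))).div
    (measurable_from_nat.comp hτ)

end Measurability

section Recurrence

open Filter Topology
open scoped NNReal

variable {Ω : Type*} {mΩ : MeasurableSpace Ω} {P : Measure Ω}

theorem submartingale_ae_not_bddAbove_range [IsFiniteMeasure P] {ℱ : Filtration ℕ mΩ}
    {M : ℕ → Ω → ℝ} {R : ℝ≥0} (hM : Submartingale M ℱ P)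
    (hbdd : ∀ᵐ ω ∂P, ∀ n, |M (n + 1) ω - M n ω| ≤ R)
    (hinc : ∀ᵐ ω ∂P, ¬ Tendsto (fun n => M (n + 1) ω - M n ω) atTop (𝓝 0)) :
    ∀ᵐ ω ∂P, ¬ BddAbove (Set.range fun n => M n ω) := by
  filter_upwards [hM.bddAbove_iff_exists_tendsto hbdd, hinc] with ω hconv hω hbound
  obtain ⟨c, hc⟩ := hconv.1 hbound
  exact hω (by simpa using (hc.comp (tendsto_add_atTop_nat 1)).sub hc)

theorem martingale_sum_range_succ {E : Type*} [NormedAddCommGroup E] [NormedSpace ℝ E]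
    [CompleteSpace E] [SecondCountableTopology E] [MeasurableSpace E] [BorelSpace E]
    {Y : ℕ → Ω → E} (hY : ∀ n, StronglyMeasurable (Y n)) (hindep : iIndepFun Y P)
    (hint : ∀ n, Integrable (Y n) P) (hmean : ∀ n, ∫ ω, Y n ω ∂P = 0) :
    Martingale (fun n => ∑ i ∈ Finset.range (n + 1), Y i) (Filtration.natural Y hY) P := by
  have : IsProbabilityMeasure P := hindep.isProbabilityMeasure
  refine martingale_of_condExp_sub_eq_zero_nat (fun n => ?_)
    (fun n => integrable_finsetSum' _ fun i _ => hint i) fun n => ?_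
  · exact Finset.stronglyMeasurable_sum _ fun i hi =>
      (Filtration.stronglyAdapted_natural hY i).mono
        ((Filtration.natural Y hY).mono (Finset.mem_range_succ_iff.1 hi))
  · rw [Finset.sum_range_succ_sub_sum]
    filter_upwards [hindep.condExp_natural_ae_eq_of_lt hY n.lt_succ_self] with ω hω
    rw [hω, hmean, Pi.zero_apply]

theorem integral_intCast_of_ae_eq_one_or_neg_one [IsFiniteMeasure P] {f : Ω → ℤ}
    (hf : Measurable f) (hstep : ∀ᵐ ω ∂P, f ω = 1 ∨ f ω = -1) :
    ∫ ω, (f ω : ℝ) ∂P = P.real {ω | f ω = 1} - P.real {ω | f ω = -1} := by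
  have h1 : MeasurableSet {ω | f ω = 1} := hf (measurableSet_singleton 1)
  have h2 : MeasurableSet {ω | f ω = -1} := hf (measurableSet_singleton (-1))
  rw [← integral_indicator_one h1, ← integral_indicator_one h2,
    ← integral_sub ((integrable_const 1).indicator h1) ((integrable_const 1).indicator h2)]
  refine integral_congr_ae ?_
  filter_upwards [hstep] with ω hω
  rcases hω with h | h <;> simp [Set.indicator, h]

theorem ae_exists_le_sum_range {X : ℕ → Ω → ℤ} (hmeas : ∀ i, Measurable (X i))
    (hindep : iIndepFun X P) (hstep : ∀ᵐ ω ∂P, ∀ i, X i ω = 1 ∨ X i ω = -1)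
    (hmean : ∀ i, ∫ ω, (X i ω : ℝ) ∂P = 0) (a : ℤ) :
    ∀ᵐ ω ∂P, ∃ n, a ≤ ∑ i ∈ Finset.range n, X i ω := by
  have : IsProbabilityMeasure P := hindep.isProbabilityMeasure
  let Y (i : ℕ) (ω : Ω) : ℝ := X i ω
  have hY (i : ℕ) : StronglyMeasurable (Y i) :=
    (measurable_from_top.comp (hmeas i)).stronglyMeasurable
  have habs : ∀ᵐ ω ∂P, ∀ i, |Y i ω| = 1 := by
    filter_upwards [hstep] with ω hω i
    rcases hω i with h | h <;> simp [Y, h]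
  have hint (i : ℕ) : Integrable (Y i) P :=
    .of_bound (hY i).aestronglyMeasurable 1 (habs.mono fun ω hω => (hω i).le)
  have hM : Martingale (fun n => ∑ i ∈ Finset.range (n + 1), Y i) (Filtration.natural Y hY) P :=
    martingale_sum_range_succ hY (hindep.comp (fun _ z => (z : ℝ)) fun _ => measurable_from_top)
      hint hmean
  have hunbdd := submartingale_ae_not_bddAbove_range (R := 1) hM.submartingale
    (by
      filter_upwards [habs] with ω hω n
      simp [Finset.sum_range_succ _ (n + 1), hω])
    (by
      filter_upwards [habs] with ω hω hlim
      have hone : Tendsto (fun _ : ℕ => (1 : ℝ)) atTop (𝓝 0) := by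
        simpa [Finset.sum_range_succ _ (_ + 1), hω] using hlim.abs
      exact one_ne_zero (tendsto_nhds_unique tendsto_const_nhds hone))
  filter_upwards [hunbdd] with ω hω
  obtain ⟨_, ⟨n, rfl⟩, hn⟩ := not_bddAbove_iff.1 hω a
  exact ⟨n + 1, by simpa [Y, ← Int.cast_sum] using hn.le⟩

end Recurrence

section Expectation

open Filter

variable {Ω : Type*} [MeasurableSpace Ω] {P : Measure Ω}

theorem ae_eq_or_eq_of_measure_add_eq_one_s13 [IsProbabilityMeasure P] {β : Type*}
    [MeasurableSpace β] [MeasurableSingletonClass β] {f : Ω → β} (hf : Measurable f) {b c : β}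
    (hbc : b ≠ c) (h : P {ω | f ω = b} + P {ω | f ω = c} = 1) :
    ∀ᵐ ω ∂P, f ω = b ∨ f ω = c := by
  have hb : MeasurableSet {ω | f ω = b} := hf (measurableSet_singleton b)
  have hc : MeasurableSet {ω | f ω = c} := hf (measurableSet_singleton c)
  have hdisj : Disjoint {ω | f ω = b} {ω | f ω = c} :=
    Set.disjoint_left.2 fun _ h h' => hbc (h.symm.trans h')
  exact (prob_compl_eq_zero_iff (hb.union hc)).2 (measure_union hdisj hc ▸ h)

theorem integral_lt_integral_of_ae_le_of_frequently_lt {f g : Ω → ℝ} (hf : Integrable f P)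
    (hg : Integrable g P) (hle : f ≤ᵐ[P] g) (hlt : ∃ᵐ ω ∂P, f ω < g ω) :
    ∫ ω, f ω ∂P < ∫ ω, g ω ∂P := by
  refine (integral_mono_ae hf hg hle).lt_of_ne fun heq => hlt ?_
  filter_upwards [(integral_eq_iff_of_ae_le hf hg hle).1 heq] with ω hω
  exact hω.not_lt

theorem integrable_headProportion [IsFiniteMeasure P] {X : ℕ → Ω → ℤ}
    (hmeas : ∀ i, Measurable (X i)) : Integrable (fun ω => headProportion (X · ω)) P := by
  refine .of_bound
    (measurable_headProportion.comp (measurable_pi_iff.2 hmeas)).aestronglyMeasurable 1 ?_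
  refine .of_forall fun ω => ?_
  rw [Real.norm_of_nonneg (headProportion_nonneg _)]
  exact headProportion_le_one _

variable [IsProbabilityMeasure P] {X : ℕ → Ω → ℤ}

theorem integral_headProportion_lt_one (hmeas : ∀ i, Measurable (X i))
    (hstep : ∀ᵐ ω ∂P, ∀ i, X i ω = 1 ∨ X i ω = -1)
    (hreach : ∀ᵐ ω ∂P, ∃ n, 1 ≤ ∑ i ∈ Finset.range n, X i ω) (h0 : ∃ᵐ ω ∂P, X 0 ω ≠ 1) :
    ∫ ω, headProportion (X · ω) ∂P < 1 := by
  calc ∫ ω, headProportion (X · ω) ∂P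
      < ∫ _, 1 ∂P := integral_lt_integral_of_ae_le_of_frequently_lt
        (integrable_headProportion hmeas) (integrable_const 1)
        (.of_forall fun ω => headProportion_le_one _)
        ((h0.and_eventually (hstep.and hreach)).mono fun ω ⟨h, hs, hr⟩ =>
          (headProportion_mem_Ioo hs hr h).2)
    _ = 1 := by simp

theorem lt_integral_headProportion (hmeas : ∀ i, Measurable (X i))
    (hstep : ∀ᵐ ω ∂P, ∀ i, X i ω = 1 ∨ X i ω = -1)
    (hreach : ∀ᵐ ω ∂P, ∃ n, 1 ≤ ∑ i ∈ Finset.range n, X i ω) (h0 : ∃ᵐ ω ∂P, X 0 ω ≠ 1) :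
    (1 + P.real {ω | X 0 ω = 1}) / 2 < ∫ ω, headProportion (X · ω) ∂P := by
  have hA : MeasurableSet {ω | X 0 ω = 1} := hmeas 0 (measurableSet_singleton 1)
  let g (ω : Ω) : ℝ := 1 / 2 + {ω | X 0 ω = 1}.indicator (fun _ => 1 / 2) ω
  have hind : Integrable ({ω | X 0 ω = 1}.indicator fun _ => (1 / 2 : ℝ)) P :=
    (integrable_const _).indicator hA
  have hg_one {ω : Ω} (h : X 0 ω = 1) : g ω = 1 := by
    simp only [g, Set.indicator_of_mem (show ω ∈ {ω | X 0 ω = 1} from h), add_halves]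
  have hg_half {ω : Ω} (h : X 0 ω ≠ 1) : g ω = 1 / 2 := by
    simp only [g, Set.indicator_of_notMem (show ω ∉ {ω | X 0 ω = 1} from h), add_zero]
  calc (1 + P.real {ω | X 0 ω = 1}) / 2
      = ∫ ω, g ω ∂P := by
        rw [integral_add (integrable_const _) hind, integral_indicator_const _ hA]
        simp only [integral_const, probReal_univ, smul_eq_mul]
        ring
    _ < ∫ ω, headProportion (X · ω) ∂P := by
        refine integral_lt_integral_of_ae_le_of_frequently_lt ((integrable_const _).add hind)
          (integrable_headProportion hmeas) ?_ ?_
        · filter_upwards [hstep, hreach] with ω hs hr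
          by_cases h : X 0 ω = 1
          · rw [hg_one h, headProportion_eq_one h]
          · exact (hg_half h).trans_le (headProportion_mem_Ioo hs hr h).1.le
        · exact (h0.and_eventually (hstep.and hreach)).mono fun ω ⟨h, hs, hr⟩ =>
            (hg_half h).trans_lt (headProportion_mem_Ioo hs hr h).1

end Expectation

/-- The expected proportion of heads at the stopping time satisfies
3/4 < E[H_τ/τ] < 1; combined with E[H_τ/τ] = π/4 this gives 3 < π < 4. -/
theorem expected_proportion_bounds
{Ω : Type*} [MeasurableSpace Ω] (P : Measure Ω) [IsProbabilityMeasure P]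
    (X : ℕ → Ω → ℤ) (hmeas : ∀ i, Measurable (X i))
    (hindep : iIndepFun X P)
    (hheads : ∀ i, P {ω | X i ω = 1} = 1/2)
    (htails : ∀ i, P {ω | X i ω = -1} = 1/2)
    (τ : Ω → ℕ) (hτ : ∀ ω, τ ω = sInf {n | 1 ≤ n ∧ (∑ i ∈ Finset.range n, X i ω) = 1})
(H : ℕ → Ω → ℕ)
    (hH : ∀ n ω, H n ω = ((Finset.range n).filter (fun i => X i ω = 1)).card) :
    3 / 4 < ∫ ω, ((H (τ ω) ω : ℝ) / (τ ω : ℝ)) ∂P ∧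
    ∫ ω, ((H (τ ω) ω : ℝ) / (τ ω : ℝ)) ∂P < 1 ∧
    ((∫ ω, ((H (τ ω) ω : ℝ) / (τ ω : ℝ)) ∂P = π / 4) → 3 < π ∧ π < 4) := by
  obtain rfl : τ = fun ω => passageTime (X · ω) 1 := funext hτ
  obtain rfl : H = fun n ω => headCount (X · ω) n := funext₂ hH
  have hstep : ∀ᵐ ω ∂P, ∀ i, X i ω = 1 ∨ X i ω = -1 := ae_all_iff.2 fun i =>
    ae_eq_or_eq_of_measure_add_eq_one_s13 (hmeas i) (by decide)
      (by rw [hheads, htails, ENNReal.add_halves])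
  have hmean (i : ℕ) : ∫ ω, (X i ω : ℝ) ∂P = 0 := by
    rw [integral_intCast_of_ae_eq_one_or_neg_one (hmeas i) (hstep.mono fun ω h => h i),
      measureReal_def, measureReal_def, hheads, htails, sub_self]
  have hreach := ae_exists_le_sum_range hmeas hindep hstep hmean 1
  have h0 : ∃ᵐ ω ∂P, X 0 ω ≠ 1 := by
    have htail : ∃ᵐ ω ∂P, X 0 ω = -1 := frequently_ae_iff.2 (by simp [htails])
    exact htail.mono fun ω h => by simp [h]
  have hlower : 3 / 4 < ∫ ω, headProportion (X · ω) ∂P := by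
    refine lt_of_eq_of_lt ?_ (lt_integral_headProportion hmeas hstep hreach h0)
    rw [measureReal_def, hheads]
    norm_num
  have hupper := integral_headProportion_lt_one hmeas hstep hreach h0
  simp only [headProportion] at hlower hupper
  exact ⟨hlower, hupper, fun h => ⟨by linarith, by linarith⟩⟩
end
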